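/- Let M have finite Gorenstein weak injective dimension n. Then M admits an injective (monomorphic) Gorenstein weak injective preenvelope φ: M → G whose cokernel V satisfies id_R(V) = n − 1 (with V = 0 when n = 0). Moreover if wid_R(M) < ∞ then G is injective. -/

import Mathlib

open CategoryTheory

universe u

noncomputable section

variable (R : Type u) [Ring R]

/-- Vanishing of `Ext^n_R(N, M)` for left `R`-modules, expressed via the `Ext` bifunctor
on the `ℤ`-linear abelian category `ModuleCat R`. -/
def ExtVanish (n : ℕ) (N M : ModuleCat.{u} R) : Prop :=
  Subsingleton (((_root_.Ext ℤ (ModuleCat.{u} R) n).obj (Opposite.op N)).obj M)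

/-- An `R`-module is super finitely presented if it admits a resolution by
finitely generated projective modules. -/
def SuperFinitelyPresented (N : ModuleCat.{u} R) : Prop :=
  ∃ (F : ℕ → ModuleCat.{u} R) (d : ∀ n, F (n + 1) →ₗ[R] F n) (ε : F 0 →ₗ[R] N),
    (∀ n, Module.Finite R (F n)) ∧ (∀ n, Module.Projective R (F n)) ∧
    Function.Surjective ε ∧ Function.Exact (d 0) ε ∧
    (∀ n, Function.Exact (d (n + 1)) (d n))

/-- An `R`-module `W` is weak injective if `Ext^1_R(N, W) = 0` for every super finitely
presented module `N`. -/
def WeakInjective (W : ModuleCat.{u} R) : Prop :=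
  ∀ N : ModuleCat.{u} R, SuperFinitelyPresented R N → ExtVanish R 1 N W

/-- `wid_R M ≤ n` : `Ext^{n+1}_R(N, M) = 0` for every super finitely presented `N`. -/
def WidLE (M : ModuleCat.{u} R) (n : ℕ) : Prop :=
  ∀ N : ModuleCat.{u} R, SuperFinitelyPresented R N → ExtVanish R (n + 1) N M

/-- The weak injective dimension, as an element of `ℕ∞`. -/
def Wid (M : ModuleCat.{u} R) : ℕ∞ :=
  sInf {c : ℕ∞ | ∃ n : ℕ, c = n ∧ WidLE R M n}

/-- A doubly infinite exact complex of injective modules which stays exact after applying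
`Hom_R(W, -)` for every module `W` in the test class `𝒯`. -/
def IsTotallyAcyclicInjComplex (𝒯 : ModuleCat.{u} R → Prop)
    (I : ℤ → ModuleCat.{u} R) (d : ∀ n : ℤ, I n →ₗ[R] I (n + 1)) : Prop :=
  (∀ n, Module.Injective R (I n)) ∧
  (∀ n, Function.Exact (d n) (d (n + 1))) ∧
  (∀ W : ModuleCat.{u} R, 𝒯 W → ∀ n,
    Function.Exact (fun g : W →ₗ[R] I n => (d n).comp g)
      (fun g : W →ₗ[R] I (n + 1) => (d (n + 1)).comp g))

/-- `M` is Gorenstein injective relative to the test class `𝒯` : `M` is the cokernel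
`Coker (I_1 → I_0)` of a `Hom(𝒯, -)`-exact exact complex of injective modules. -/
def GorensteinRelInjective (𝒯 : ModuleCat.{u} R → Prop) (M : ModuleCat.{u} R) : Prop :=
  ∃ (I : ℤ → ModuleCat.{u} R) (d : ∀ n : ℤ, I n →ₗ[R] I (n + 1)) (π : I 0 →ₗ[R] M),
    IsTotallyAcyclicInjComplex R 𝒯 I d ∧
    Function.Surjective π ∧ Function.Exact (d (-1)) π

/-- Gorenstein weak injective modules: the test class is that of weak injective modules. -/
def GorensteinWeakInjective (M : ModuleCat.{u} R) : Prop :=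
  GorensteinRelInjective R (WeakInjective R) M

/-- Gorenstein injective modules: the test class is that of injective modules. -/
def GorensteinInjective (M : ModuleCat.{u} R) : Prop :=
  GorensteinRelInjective R (fun E => Module.Injective R E) M

/-- The data of an exact sequence `0 → M → G^0 → ⋯ → G^n → 0` (the modules `G^i` for
`i > n` being trivial). -/
def IsFiniteCoresolution (M : ModuleCat.{u} R) (n : ℕ) (G : ℕ → ModuleCat.{u} R)
    (d : ∀ i, G i →ₗ[R] G (i + 1)) (ε : M →ₗ[R] G 0) : Prop :=
  Function.Injective ε ∧ Function.Exact ε (d 0) ∧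
  (∀ i, Function.Exact (d i) (d (i + 1))) ∧
  (∀ i, n < i → ∀ x : G i, x = 0)

/-- `Gwid_R M ≤ n` : `M` has a coresolution of length `n` by Gorenstein weak injective
modules. -/
def GwidLE (M : ModuleCat.{u} R) (n : ℕ) : Prop :=
  ∃ (G : ℕ → ModuleCat.{u} R) (d : ∀ i, G i →ₗ[R] G (i + 1)) (ε : M →ₗ[R] G 0),
    IsFiniteCoresolution R M n G d ε ∧ ∀ i, GorensteinWeakInjective R (G i)

/-- The Gorenstein weak injective dimension, as an element of `ℕ∞`. -/
def Gwid (M : ModuleCat.{u} R) : ℕ∞ :=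
  sInf {c : ℕ∞ | ∃ n : ℕ, c = n ∧ GwidLE R M n}

/-- `Gid_R M ≤ n`, via coresolutions by Gorenstein injective modules. -/
def GidLE (M : ModuleCat.{u} R) (n : ℕ) : Prop :=
  ∃ (G : ℕ → ModuleCat.{u} R) (d : ∀ i, G i →ₗ[R] G (i + 1)) (ε : M →ₗ[R] G 0),
    IsFiniteCoresolution R M n G d ε ∧ ∀ i, GorensteinInjective R (G i)

/-- The Gorenstein injective dimension, as an element of `ℕ∞`. -/
def Gid (M : ModuleCat.{u} R) : ℕ∞ :=
  sInf {c : ℕ∞ | ∃ n : ℕ, c = n ∧ GidLE R M n}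

/-- `id_R M ≤ n`, via coresolutions by injective modules. -/
def IdLE (M : ModuleCat.{u} R) (n : ℕ) : Prop :=
  ∃ (G : ℕ → ModuleCat.{u} R) (d : ∀ i, G i →ₗ[R] G (i + 1)) (ε : M →ₗ[R] G 0),
    IsFiniteCoresolution R M n G d ε ∧ ∀ i, Module.Injective R (G i)

/-- The injective dimension, as an element of `ℕ∞`. -/
def Idim (M : ModuleCat.{u} R) : ℕ∞ :=
  sInf {c : ℕ∞ | ∃ n : ℕ, c = n ∧ IdLE R M n}

/-- The data of an exact sequence `0 → P_n → ⋯ → P_0 → M → 0`. -/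
def IsFiniteResolution (M : ModuleCat.{u} R) (n : ℕ) (P : ℕ → ModuleCat.{u} R)
    (d : ∀ i, P (i + 1) →ₗ[R] P i) (ε : P 0 →ₗ[R] M) : Prop :=
  Function.Surjective ε ∧ Function.Exact (d 0) ε ∧
  (∀ i, Function.Exact (d (i + 1)) (d i)) ∧
  (∀ i, n < i → ∀ x : P i, x = 0)

/-- `pd_R M ≤ n`, via resolutions by projective modules. -/
def PdLE (M : ModuleCat.{u} R) (n : ℕ) : Prop :=
  ∃ (P : ℕ → ModuleCat.{u} R) (d : ∀ i, P (i + 1) →ₗ[R] P i) (ε : P 0 →ₗ[R] M),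
    IsFiniteResolution R M n P d ε ∧ ∀ i, Module.Projective R (P i)

end

variable (R : Type u) [Ring R]

/-- A short exact sequence `0 → L → M → N → 0` of `R`-modules. -/
def ShortExactSeq (L M N : ModuleCat.{u} R) (f : L →ₗ[R] M) (g : M →ₗ[R] N) : Prop :=
  Function.Injective f ∧ Function.Surjective g ∧ Function.Exact f g

/-- Exactness of `0 → Hom(C, X) → Hom(B, X) → Hom(A, X) → 0` induced by
`0 → A → B → C → 0`. -/
def HomContraExact (X : ModuleCat.{u} R) {A B C : ModuleCat.{u} R}
    (f : A →ₗ[R] B) (g : B →ₗ[R] C) : Prop :=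
  Function.Injective (fun h : C →ₗ[R] X => h.comp g) ∧
  Function.Exact (fun h : C →ₗ[R] X => h.comp g) (fun h : B →ₗ[R] X => h.comp f) ∧
  Function.Surjective (fun h : B →ₗ[R] X => h.comp f)

/-- A short exact sequence is `GWI`-copure exact if `Hom_R(-, X)` leaves it exact for
every Gorenstein weak injective module `X`. -/
def GWICopureExact {A B C : ModuleCat.{u} R} (f : A →ₗ[R] B) (g : B →ₗ[R] C) : Prop :=
  ShortExactSeq R A B C f g ∧
  ∀ X : ModuleCat.{u} R, GorensteinWeakInjective R X → HomContraExact R X f g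

/-- `M` is `GWI`-copure injective if `Hom_R(-, M)` is exact on every `GWI`-copure exact
sequence. -/
def GWICopureInjectiveMod (M : ModuleCat.{u} R) : Prop :=
  ∀ (A B C : ModuleCat.{u} R) (f : A →ₗ[R] B) (g : B →ₗ[R] C),
    GWICopureExact R f g → HomContraExact R M f g

/-- `φ : M → G` is a Gorenstein weak injective preenvelope of `M`. -/
def GWIPreenvelope (M G : ModuleCat.{u} R) (φ : M →ₗ[R] G) : Prop :=
  GorensteinWeakInjective R G ∧
  ∀ G' : ModuleCat.{u} R, GorensteinWeakInjective R G' →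
    ∀ f : M →ₗ[R] G', ∃ g : G →ₗ[R] G', g.comp φ = f

/-- A `WI`-pure Tate injective resolution of `M` : an injective resolution
`0 → M → E^0 → E^1 → ⋯`, a `WI`-pure exact complex `T` of injectives, and a chain map
`u : E → T` which is an isomorphism in all sufficiently large degrees. -/
def WIPureTateInjectiveResolution (M : ModuleCat.{u} R)
    (E : ℕ → ModuleCat.{u} R) (dE : ∀ n, E n →ₗ[R] E (n + 1)) (ε : M →ₗ[R] E 0)
    (T : ℤ → ModuleCat.{u} R) (dT : ∀ n : ℤ, T n →ₗ[R] T (n + 1))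
    (u : ∀ n : ℕ, E n →ₗ[R] T n) : Prop :=
  (∀ n, Module.Injective R (E n)) ∧ Function.Injective ε ∧
  Function.Exact ε (dE 0) ∧ (∀ n, Function.Exact (dE n) (dE (n + 1))) ∧
  IsTotallyAcyclicInjComplex R (WeakInjective R) T dT ∧
  (∀ n : ℕ, (dT n).comp (u n) = (u (n + 1)).comp (dE n)) ∧
  ∃ N : ℕ, ∀ n, N ≤ n → Function.Bijective (u n)

/-- Vanishing of the relative Tate cohomology `Êxt^i_GWI(N, M)` for all `i ∈ ℤ`,
computed from the `WI`-pure exact complex `T` : the complex `Hom_R(N, T)` is exact. -/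
def ExtHatVanishesAll (N : ModuleCat.{u} R) (T : ℤ → ModuleCat.{u} R)
    (dT : ∀ n : ℤ, T n →ₗ[R] T (n + 1)) : Prop :=
  ∀ n : ℤ, Function.Exact (fun g : N →ₗ[R] T n => (dT n).comp g)
    (fun g : N →ₗ[R] T (n + 1) => (dT (n + 1)).comp g)


/-- The categorical projective resolution attached to a resolution by projective modules. -/
noncomputable def projectiveResolutionOfExact {N : ModuleCat.{u} R} (F : ℕ → ModuleCat.{u} R)
    (d : ∀ n, F (n + 1) →ₗ[R] F n) (ε : F 0 →ₗ[R] N) (hF : ∀ n, Module.Projective R (F n))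
    (hε : Function.Surjective ε) (h0 : Function.Exact (d 0) ε)
    (hd : ∀ n, Function.Exact (d (n + 1)) (d n)) : ProjectiveResolution N where
  complex := ChainComplex.of F (fun n => ModuleCat.ofHom (d n))
    (fun n => by ext x; exact (hd n).apply_apply_eq_zero x)
  projective n := (IsProjective.iff_projective (F n)).mp (hF n)
  π := (ChainComplex.toSingle₀Equiv _ _).symm ⟨ModuleCat.ofHom ε, by
    ext x
    exact h0.apply_apply_eq_zero x⟩
  quasiIso := ⟨fun n => by
    cases n with
    | zero =>
      rw [ChainComplex.quasiIsoAt₀_iff, ShortComplex.quasiIso_iff_of_zeros' _ ?_ ?_ ?_]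
      · refine ⟨ModuleCat.shortComplex_exact _ ?_, (ModuleCat.epi_iff_surjective _).mpr ?_⟩
        · exact h0
        · exact hε
      all_goals rfl
    | succ n =>
      rw [quasiIsoAt_iff_exactAt']
      · rw [HomologicalComplex.exactAt_iff' _ (n + 2) (n + 1) n (by simp) (by simp)]
        refine ModuleCat.shortComplex_exact _ ?_
        exact (congrArg₂ (fun a b => Function.Exact (ModuleCat.Hom.hom a) (ModuleCat.Hom.hom b))
          (ChainComplex.of_d (X := F) (d := fun n => ModuleCat.ofHom (d n)) (n + 1))
          (ChainComplex.of_d (X := F) (d := fun n => ModuleCat.ofHom (d n)) n)).mpr (hd n)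
      · apply ChainComplex.exactAt_succ_single_obj⟩

/-- Exactness of `Hom(F_k, M) → Hom(F_{k+1}, M) → Hom(F_{k+2}, M)`. -/
def HomExactAt (F : ℕ → ModuleCat.{u} R) (d : ∀ n, F (n + 1) →ₗ[R] F n) (M : ModuleCat.{u} R)
    (k : ℕ) : Prop :=
  ∀ f : F (k + 1) →ₗ[R] M, f.comp (d (k + 1)) = 0 → ∃ g : F k →ₗ[R] M, g.comp (d k) = f

theorem extVanish_succ_iff {N M : ModuleCat.{u} R} (F : ℕ → ModuleCat.{u} R)
    (d : ∀ n, F (n + 1) →ₗ[R] F n) (ε : F 0 →ₗ[R] N) (hF : ∀ n, Module.Projective R (F n))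
    (hε : Function.Surjective ε) (h0 : Function.Exact (d 0) ε)
    (hd : ∀ n, Function.Exact (d (n + 1)) (d n)) (k : ℕ) :
    ExtVanish R (k + 1) N M ↔ HomExactAt R F d M k := by
  let P := projectiveResolutionOfExact R F d ε hF hε h0 hd
  have e := P.isoExt (R := ℤ) (k + 1) M
  rw [ExtVanish, e.toLinearEquiv.toEquiv.subsingleton_congr,
    ← ModuleCat.isZero_iff_subsingleton, ← HomologicalComplex.exactAt_iff_isZero_homology,
    HomologicalComplex.exactAt_iff' _ k (k + 1) (k + 2) (by simp) (by simp),
    ShortComplex.moduleCat_exact_iff]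
  have hPd (n : ℕ) : P.complex.d (n + 1) n = ModuleCat.ofHom (d n) :=
    ChainComplex.of_d (X := F) (d := fun n => ModuleCat.ofHom (d n)) n
  have key : ∀ n (x : P.complex.X n ⟶ M),
      (P.complex.linearYonedaObj ℤ M).d n (n + 1) x = ModuleCat.ofHom (d n) ≫ x := by
    intro n x
    rw [← hPd]
    rfl
  constructor
  · intro H f hf
    obtain ⟨g, hg⟩ := H (ModuleCat.ofHom f) ((key (k + 1) (ModuleCat.ofHom f)).trans (by
      rw [← ModuleCat.ofHom_comp, hf]; rfl))
    refine ⟨ModuleCat.Hom.hom g, ?_⟩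
    have := (key k g).symm.trans hg
    exact congrArg ModuleCat.Hom.hom this
  · intro H x hx
    obtain ⟨g, hg⟩ := H (ModuleCat.Hom.hom x)
      (congrArg ModuleCat.Hom.hom ((key (k + 1) x).symm.trans hx))
    refine ⟨ModuleCat.ofHom g, (key k (ModuleCat.ofHom g)).trans ?_⟩
    rw [← ModuleCat.ofHom_comp, hg]
    rfl

section

variable {R}

theorem exists_comp_eq_of_surjective {A B C : Type*} [AddCommGroup A] [Module R A]
    [AddCommGroup B] [Module R B] [AddCommGroup C] [Module R C] {p : A →ₗ[R] B}
    (hp : Function.Surjective p) (f : A →ₗ[R] C) (h : ∀ x, p x = 0 → f x = 0) :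
    ∃ g : B →ₗ[R] C, ∀ x, g (p x) = f x := by
  refine ⟨((LinearMap.ker p).liftQ f (fun x hx => h x hx)).comp
    (p.quotKerEquivOfSurjective hp).symm.toLinearMap, fun x => ?_⟩
  have : (p.quotKerEquivOfSurjective hp).symm (p x) = (LinearMap.ker p).mkQ x := by
    rw [LinearEquiv.symm_apply_eq]
    rfl
  simp only [LinearMap.comp_apply, LinearEquiv.coe_coe, this]
  exact Submodule.liftQ_apply _ f x

theorem exists_comp_eq_of_injective {A B C : Type*} [AddCommGroup A] [Module R A]
    [AddCommGroup B] [Module R B] [AddCommGroup C] [Module R C] {i : B →ₗ[R] C}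
    (hi : Function.Injective i) (f : A →ₗ[R] C) (h : ∀ x, ∃ y, i y = f x) :
    ∃ g : A →ₗ[R] B, ∀ x, i (g x) = f x := by
  refine ⟨(LinearEquiv.ofInjective i hi).symm.toLinearMap.comp
    (f.codRestrict (LinearMap.range i) h), fun x => ?_⟩
  have := LinearEquiv.apply_symm_apply (LinearEquiv.ofInjective i hi)
    (f.codRestrict (LinearMap.range i) h x)
  exact congrArg Subtype.val this

theorem Module.Injective.exists_extension {A B I : ModuleCat.{u} R} (hI : Module.Injective R I)
    {i : A →ₗ[R] B} (hi : Function.Injective i) (f : A →ₗ[R] I) :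
    ∃ g : B →ₗ[R] I, ∀ x, g (i x) = f x :=
  hI.out i hi f

theorem Module.Injective.exists_extension_of_exact {A B C I : ModuleCat.{u} R}
    (hI : Module.Injective R I) {a : A →ₗ[R] B} {b : B →ₗ[R] C} (h : Function.Exact a b)
    (f : B →ₗ[R] I) (hf : ∀ x, f (a x) = 0) : ∃ g : C →ₗ[R] I, ∀ x, g (b x) = f x := by
  obtain ⟨t, ht⟩ := exists_comp_eq_of_surjective b.surjective_rangeRestrict f (fun x hx => by
    obtain ⟨y, rfl⟩ := (h x).1 (congrArg Subtype.val hx)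
    exact hf y)
  obtain ⟨g, hg⟩ := hI.exists_extension (A := ModuleCat.of R (LinearMap.range b))
    (i := (LinearMap.range b).subtype) Subtype.val_injective t
  exact ⟨g, fun x => (hg (b.rangeRestrict x)).trans (ht x)⟩

theorem Module.Injective.of_retract {E I : ModuleCat.{u} R} (hI : Module.Injective R I)
    (i : E →ₗ[R] I) (p : I →ₗ[R] E) (h : ∀ x, p (i x) = x) : Module.Injective R E where
  out X Y _ _ _ _ f hf g := by
    obtain ⟨t, ht⟩ := hI.out f hf (i.comp g)
    exact ⟨p.comp t, fun x => by simp [ht, h]⟩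

theorem Module.Injective.prod {I J : ModuleCat.{u} R} (hI : Module.Injective R I)
    (hJ : Module.Injective R J) : Module.Injective R (I × J) where
  out X Y _ _ _ _ f hf g := by
    obtain ⟨s, hs⟩ := hI.out f hf ((LinearMap.fst R I J).comp g)
    obtain ⟨t, ht⟩ := hJ.out f hf ((LinearMap.snd R I J).comp g)
    exact ⟨s.prod t, fun x => Prod.ext (hs x) (ht x)⟩

theorem Module.injective_of_subsingleton (E : Type u) [AddCommGroup E] [Module R E]
    [Subsingleton E] : Module.Injective R E where
  out _ _ _ _ _ _ _ _ _ := ⟨0, fun _ => Subsingleton.elim _ _⟩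

namespace ShortExactSeq

variable {L M N : ModuleCat.{u} R} {f : L →ₗ[R] M} {g : M →ₗ[R] N}

theorem apply_apply (h : ShortExactSeq R L M N f g) (x : L) : g (f x) = 0 :=
  h.2.2.apply_apply_eq_zero x

theorem exists_of_apply_eq_zero (h : ShortExactSeq R L M N f g) {x : M} (hx : g x = 0) :
    ∃ y, f y = x :=
  (h.2.2 x).1 hx

theorem mk' (h₁ : Function.Injective f) (h₂ : Function.Surjective g) (h₃ : ∀ x, g (f x) = 0)
    (h₄ : ∀ x, g x = 0 → ∃ y, f y = x) : ShortExactSeq R L M N f g :=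
  ⟨h₁, h₂, fun x => ⟨h₄ x, by rintro ⟨y, rfl⟩; exact h₃ y⟩⟩

/-- Lifting along an injective coresolution of the kernel implies lifting along every
epimorphism with that kernel. -/
theorem exists_lift {W A B C I D : ModuleCat.{u} R} {i : A →ₗ[R] B} {p : B →ₗ[R] C}
    {j : A →ₗ[R] I} {q : I →ₗ[R] D} (h : ShortExactSeq R A B C i p)
    (hI : Module.Injective R I) (h' : ShortExactSeq R A I D j q)
    (hW : ∀ w : W →ₗ[R] D, ∃ v : W →ₗ[R] I, ∀ x, q (v x) = w x) (w : W →ₗ[R] C) :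
    ∃ v : W →ₗ[R] B, ∀ x, p (v x) = w x := by
  obtain ⟨g, hg⟩ := hI.exists_extension h.1 j
  obtain ⟨t, ht⟩ := exists_comp_eq_of_surjective h.2.1 (q.comp g) (fun x hx => by
    obtain ⟨a, rfl⟩ := h.exists_of_apply_eq_zero hx
    simp [hg, h'.apply_apply])
  obtain ⟨v, hv⟩ := hW (t.comp w)
  have hinj : Function.Injective (g.prod p) := by
    rw [injective_iff_map_eq_zero]
    intro x hx
    have h1 : g x = 0 := congrArg Prod.fst hx
    have h2 : p x = 0 := congrArg Prod.snd hx
    obtain ⟨a, rfl⟩ := h.exists_of_apply_eq_zero h2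
    rw [hg] at h1
    rw [(injective_iff_map_eq_zero j).1 h'.1 a h1, map_zero]
  obtain ⟨s, hs⟩ := exists_comp_eq_of_injective hinj (v.prod w) (fun x => by
    obtain ⟨b, hb⟩ := h.2.1 (w x)
    obtain ⟨a, ha⟩ := h'.exists_of_apply_eq_zero (x := v x - g b) (by
      have := ht b
      simp only [LinearMap.comp_apply] at this
      simp [hv, ← this, hb])
    exact ⟨b + i a, Prod.ext (by simp [hg, ha]) (by simp [hb, h.apply_apply])⟩)
  exact ⟨s, fun x => congrArg Prod.snd (hs x)⟩

/-- Maps into `A` extend along a monomorphism with cokernel `V'` as soon as maps out of `V'`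
lift along an injective coresolution of `A`. -/
theorem exists_extension {V E V' A I D : ModuleCat.{u} R} {k : V →ₗ[R] E} {r : E →ₗ[R] V'}
    {j : A →ₗ[R] I} {q : I →ₗ[R] D} (h : ShortExactSeq R V E V' k r)
    (hI : Module.Injective R I) (h' : ShortExactSeq R A I D j q)
    (hV' : ∀ w : V' →ₗ[R] D, ∃ v : V' →ₗ[R] I, ∀ x, q (v x) = w x) (f : V →ₗ[R] A) :
    ∃ g : E →ₗ[R] A, ∀ x, g (k x) = f x := by
  obtain ⟨g, hg⟩ := hI.exists_extension h.1 (j.comp f)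
  obtain ⟨t, ht⟩ := exists_comp_eq_of_surjective h.2.1 (q.comp g) (fun x hx => by
    obtain ⟨a, rfl⟩ := h.exists_of_apply_eq_zero hx
    simp [hg, h'.apply_apply])
  obtain ⟨s, hs⟩ := hV' t
  obtain ⟨m, hm⟩ := exists_comp_eq_of_injective h'.1 (g - s.comp r) (fun x =>
    h'.exists_of_apply_eq_zero (by simp [hs, ht]))
  refine ⟨m, fun x => h'.1 ?_⟩
  simp [hm, hg, h.apply_apply]

end ShortExactSeq

/-! ### Weak injective dimension -/

section HomExactAt

variable {F : ℕ → ModuleCat.{u} R} {d : ∀ n, F (n + 1) →ₗ[R] F n} {k : ℕ}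

theorem homExactAt_iff {M : ModuleCat.{u} R} : HomExactAt R F d M k ↔
    ∀ f : F (k + 1) →ₗ[R] M, (∀ x, f (d (k + 1) x) = 0) →
      ∃ g : F k →ₗ[R] M, ∀ x, g (d k x) = f x := by
  simp only [HomExactAt, LinearMap.ext_iff, LinearMap.comp_apply, LinearMap.zero_apply]

variable {L M N : ModuleCat.{u} R} {i : L →ₗ[R] M} {p : M →ₗ[R] N}

theorem homExactAt_of_injective (hd : Function.Exact (d (k + 1)) (d k))
    (hM : Module.Injective R M) : HomExactAt R F d M k :=
  homExactAt_iff.2 fun f hf => hM.exists_extension_of_exact hd f hf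

variable (hF : ∀ n, Module.Projective R (F n)) (hd : ∀ n, Function.Exact (d (n + 1)) (d n))
include hF hd

theorem HomExactAt.left (h : ShortExactSeq R L M N i p) (hM : HomExactAt R F d M (k + 1))
    (hN : HomExactAt R F d N k) : HomExactAt R F d L (k + 1) := by
  rw [homExactAt_iff] at *
  intro f hf
  obtain ⟨g, hg⟩ := hM (i.comp f) (fun x => by simp [hf])
  obtain ⟨t, ht⟩ := hN (p.comp g) (fun x => by simp [hg, h.apply_apply])
  obtain ⟨s, hs⟩ := Module.projective_lifting_property p t h.2.1
  obtain ⟨m, hm⟩ := exists_comp_eq_of_injective h.1 (g - s.comp (d k)) (fun x =>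
    h.exists_of_apply_eq_zero (by
      have := LinearMap.congr_fun hs (d k x)
      simp only [LinearMap.comp_apply] at this
      simp [this, ht]))
  refine ⟨m, fun x => h.1 ?_⟩
  simp [hm, hg, (hd k).apply_apply_eq_zero]

theorem HomExactAt.middle (h : ShortExactSeq R L M N i p) (hL : HomExactAt R F d L k)
    (hN : HomExactAt R F d N k) : HomExactAt R F d M k := by
  rw [homExactAt_iff] at *
  intro f hf
  obtain ⟨t, ht⟩ := hN (p.comp f) (fun x => by simp [hf])
  obtain ⟨s, hs⟩ := Module.projective_lifting_property p t h.2.1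
  obtain ⟨m, hm⟩ := exists_comp_eq_of_injective h.1 (f - s.comp (d k)) (fun x =>
    h.exists_of_apply_eq_zero (by
      have := LinearMap.congr_fun hs (d k x)
      simp only [LinearMap.comp_apply] at this
      simp [this, ht]))
  obtain ⟨n, hn⟩ := hL m (fun x => h.1 (by simp [hm, hf, (hd k).apply_apply_eq_zero]))
  exact ⟨s + i.comp n, fun x => by simp [hn, hm]⟩

theorem HomExactAt.right (h : ShortExactSeq R L M N i p) (hM : Module.Injective R M)
    (hL : HomExactAt R F d L (k + 1)) : HomExactAt R F d N k := by
  rw [homExactAt_iff] at *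
  intro f hf
  obtain ⟨g, hg⟩ := Module.projective_lifting_property p f h.2.1
  have hg (x) : p (g x) = f x := LinearMap.congr_fun hg x
  obtain ⟨m, hm⟩ := exists_comp_eq_of_injective h.1 (g.comp (d (k + 1))) (fun x =>
    h.exists_of_apply_eq_zero (by simp [hg, hf]))
  obtain ⟨n, hn⟩ := hL m (fun x => h.1 (by simp [hm, (hd (k + 1)).apply_apply_eq_zero]))
  obtain ⟨t, ht⟩ := hM.exists_extension_of_exact (hd k) (g - i.comp n)
    (fun x => by simp [hn, hm])
  exact ⟨p.comp t, fun x => by simp [ht, hg, h.apply_apply]⟩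

end HomExactAt

theorem widLE_iff {M : ModuleCat.{u} R} {k : ℕ} : WidLE R M k ↔
    ∀ (F : ℕ → ModuleCat.{u} R) (d : ∀ n, F (n + 1) →ₗ[R] F n),
      (∀ n, Module.Finite R (F n)) → (∀ n, Module.Projective R (F n)) →
      (∀ n, Function.Exact (d (n + 1)) (d n)) → HomExactAt R F d M k := by
  constructor
  · intro h F d hfin hF hd
    have h0 : Function.Exact (d 0) (LinearMap.range (d 0)).mkQ := by
      rw [LinearMap.exact_iff, Submodule.ker_mkQ]
    have hs := (LinearMap.range (d 0)).mkQ_surjective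
    exact (extVanish_succ_iff R (N := ModuleCat.of R (F 0 ⧸ LinearMap.range (d 0))) F d
      (LinearMap.range (d 0)).mkQ hF hs h0 hd k).1 (h _ ⟨F, d, _, hfin, hF, hs, h0, hd⟩)
  · rintro h N ⟨F, d, ε, hfin, hF, hε, h0, hd⟩
    exact (extVanish_succ_iff R F d ε hF hε h0 hd k).2 (h F d hfin hF hd)

theorem widLE_of_injective {M : ModuleCat.{u} R} (hM : Module.Injective R M) (k : ℕ) :
    WidLE R M k :=
  widLE_iff.2 fun _ _ _ _ hd => homExactAt_of_injective (hd k) hM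

theorem weakInjective_of_injective {M : ModuleCat.{u} R} (hM : Module.Injective R M) :
    WeakInjective R M :=
  widLE_of_injective hM 0

theorem WidLE.succ {M : ModuleCat.{u} R} {k : ℕ} (h : WidLE R M k) : WidLE R M (k + 1) :=
  widLE_iff.2 fun F d hfin hF hd =>
    widLE_iff.1 h (fun n => F (n + 1)) (fun n => d (n + 1)) (fun n => hfin (n + 1))
      (fun n => hF (n + 1)) (fun n => hd (n + 1))

theorem WidLE.mono {M : ModuleCat.{u} R} {k l : ℕ} (h : WidLE R M k) (hkl : k ≤ l) :
    WidLE R M l := by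
  induction hkl with
  | refl => exact h
  | step _ ih => exact ih.succ

section

variable {L M N : ModuleCat.{u} R} {i : L →ₗ[R] M} {p : M →ₗ[R] N} {k : ℕ}

theorem WidLE.left (h : ShortExactSeq R L M N i p) (hM : WidLE R M (k + 1))
    (hN : WidLE R N k) : WidLE R L (k + 1) :=
  widLE_iff.2 fun F d hfin hF hd =>
    (widLE_iff.1 hM F d hfin hF hd).left hF hd h (widLE_iff.1 hN F d hfin hF hd)

theorem WidLE.middle (h : ShortExactSeq R L M N i p) (hL : WidLE R L k)
    (hN : WidLE R N k) : WidLE R M k :=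
  widLE_iff.2 fun F d hfin hF hd =>
    (widLE_iff.1 hL F d hfin hF hd).middle hF hd h (widLE_iff.1 hN F d hfin hF hd)

theorem WidLE.right (h : ShortExactSeq R L M N i p) (hM : Module.Injective R M)
    (hL : WidLE R L (k + 1)) : WidLE R N k :=
  widLE_iff.2 fun F d hfin hF hd =>
    (widLE_iff.1 hL F d hfin hF hd).right hF hd h hM

end

/-! ### Gorenstein weak injective modules -/

theorem exists_int_chain {α : Type*} (r : α → α → Prop) (hnext : ∀ a, ∃ b, r a b)
    (hprev : ∀ b, ∃ a, r a b) (a : α) :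
    ∃ Z : ℤ → α, Z 1 = a ∧ ∀ n, r (Z n) (Z (n + 1)) := by
  choose s hs using hnext
  choose t ht using hprev
  let Z : ℤ → α := fun n => match n with
    | Int.ofNat k => s^[k] a
    | Int.negSucc k => t^[k + 1] a
  have hZ : ∀ n, r (Z n) (Z (n + 1)) := by
    rintro (k | _ | k)
    · have : Z (Int.ofNat k + 1) = s (s^[k] a) := Function.iterate_succ_apply' s k a
      rw [this]
      exact hs _
    · exact ht a
    · have h₁ : Z (Int.negSucc (k + 1)) = t (t^[k + 1] a) :=
        Function.iterate_succ_apply' t (k + 1) a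
      have h₂ : Z (Int.negSucc (k + 1) + 1) = t^[k + 1] a := rfl
      rw [h₁, h₂]
      exact ht _
  refine ⟨fun n => Z (n - 1), rfl, fun n => ?_⟩
  have := hZ (n - 1)
  rwa [show n - 1 + 1 = n + 1 - 1 by ring] at this

/-- `A` and `B` are consecutive syzygies: there is a short exact sequence `0 → A → I → B → 0`
with `I` injective which stays exact under `Hom(W, -)` for `W` weak injective. -/
def GWIStep (A B : ModuleCat.{u} R) : Prop :=
  ∃ (I : ModuleCat.{u} R) (i : A →ₗ[R] I) (p : I →ₗ[R] B), Module.Injective R I ∧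
    ShortExactSeq R A I B i p ∧
    ∀ W : ModuleCat.{u} R, WeakInjective R W → ∀ w : W →ₗ[R] B,
      ∃ v : W →ₗ[R] I, ∀ x, p (v x) = w x

theorem GorensteinWeakInjective.of_steps {𝒢 : ModuleCat.{u} R → Prop}
    (hnext : ∀ A, 𝒢 A → ∃ B, 𝒢 B ∧ GWIStep A B) (hprev : ∀ B, 𝒢 B → ∃ A, 𝒢 A ∧ GWIStep A B)
    {M : ModuleCat.{u} R} (hM : 𝒢 M) : GorensteinWeakInjective R M := by
  obtain ⟨Z, hZ1, hZ⟩ := exists_int_chain (α := {A // 𝒢 A}) (fun A B => GWIStep A.1 B.1)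
    (fun A => let ⟨B, hB, h⟩ := hnext A.1 A.2; ⟨⟨B, hB⟩, h⟩)
    (fun B => let ⟨A, hA, h⟩ := hprev B.1 B.2; ⟨⟨A, hA⟩, h⟩) ⟨M, hM⟩
  obtain rfl : (Z 1).1 = M := congrArg Subtype.val hZ1
  choose I i p hI h hW using hZ
  have hex (n : ℤ) : Function.Exact ((i (n + 1)).comp (p n)) (p (n + 1)) := by
    intro x
    constructor
    · intro hx
      obtain ⟨y, rfl⟩ := (h (n + 1)).exists_of_apply_eq_zero hx
      obtain ⟨z, rfl⟩ := (h n).2.1 y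
      exact ⟨z, rfl⟩
    · rintro ⟨y, rfl⟩
      exact (h (n + 1)).apply_apply _
  refine ⟨I, fun n => (i (n + 1)).comp (p n), p 0, ⟨hI, fun n x => ?_, fun W hW' n g => ?_⟩,
    (h 0).2.1, hex (-1)⟩
  · refine Iff.trans ⟨fun hx => ?_, fun hx => ?_⟩ (hex n x)
    · exact (injective_iff_map_eq_zero (i (n + 1 + 1))).1 (h (n + 1 + 1)).1 _ hx
    · simp [hx]
  · constructor
    · intro hg
      obtain ⟨w, hw⟩ := exists_comp_eq_of_injective (h (n + 1)).1 g (fun x =>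
        (h (n + 1)).exists_of_apply_eq_zero
          ((injective_iff_map_eq_zero (i (n + 1 + 1))).1 (h (n + 1 + 1)).1 _
            (LinearMap.congr_fun hg x)))
      obtain ⟨v, hv⟩ := hW n W hW' w
      exact ⟨v, LinearMap.ext fun x => by simp [hv, hw]⟩
    · rintro ⟨v, rfl⟩
      ext x
      simp [(h (n + 1)).apply_apply]

section Cycles

variable {I : ℤ → ModuleCat.{u} R} {d : ∀ n : ℤ, I n →ₗ[R] I (n + 1)}

theorem IsTotallyAcyclicInjComplex.gwiStep (h : IsTotallyAcyclicInjComplex R (WeakInjective R) I d)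
    (n : ℤ) {M : ModuleCat.{u} R} {i : M →ₗ[R] I n} (hi : Function.Injective i)
    (hex : Function.Exact i (d n)) :
    GWIStep M (ModuleCat.of R (LinearMap.ker (d (n + 1)))) := by
  refine ⟨I n, i, (d n).codRestrict _ fun x => (h.2.1 n).apply_apply_eq_zero x, h.1 n,
    .mk' hi ?_ ?_ ?_, fun W hW w => ?_⟩
  · rintro ⟨x, hx⟩
    obtain ⟨y, rfl⟩ := (h.2.1 n x).1 hx
    exact ⟨y, rfl⟩
  · exact fun x => Subtype.ext (hex.apply_apply_eq_zero x)
  · exact fun x hx => (hex x).1 (congrArg Subtype.val hx)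
  · obtain ⟨v, hv⟩ := (h.2.2 W hW n ((LinearMap.ker (d (n + 1))).subtype.comp w)).1
      (LinearMap.ext fun x => (w x).2)
    exact ⟨v, fun x => Subtype.ext (LinearMap.congr_fun hv x)⟩

theorem IsTotallyAcyclicInjComplex.gwi_ker
    (h : IsTotallyAcyclicInjComplex R (WeakInjective R) I d) (n : ℤ) :
    GorensteinWeakInjective R (ModuleCat.of R (LinearMap.ker (d n))) := by
  have step (n : ℤ) : GWIStep (ModuleCat.of R (LinearMap.ker (d n)))
      (ModuleCat.of R (LinearMap.ker (d (n + 1)))) :=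
    h.gwiStep n (i := (LinearMap.ker (d n)).subtype) Subtype.val_injective (fun x => by simp)
  refine .of_steps (𝒢 := fun X => ∃ n, X = ModuleCat.of R (LinearMap.ker (d n))) ?_ ?_ ⟨n, rfl⟩
  · rintro _ ⟨n, rfl⟩
    exact ⟨_, ⟨n + 1, rfl⟩, step n⟩
  · rintro _ ⟨n, rfl⟩
    obtain ⟨m, rfl⟩ : ∃ m, n = m + 1 := ⟨n - 1, by ring⟩
    exact ⟨_, ⟨m, rfl⟩, step m⟩

end Cycles

theorem GorensteinWeakInjective.exists_steps {M : ModuleCat.{u} R}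
    (hM : GorensteinWeakInjective R M) :
    (∃ B, GorensteinWeakInjective R B ∧ GWIStep M B) ∧
      ∃ A, GorensteinWeakInjective R A ∧ GWIStep A M := by
  obtain ⟨I, d, π, h, hπ, hex⟩ := hM
  have hex0 : Function.Exact (d (-1)) (d 0) := h.2.1 (-1)
  obtain ⟨i, hi⟩ := exists_comp_eq_of_surjective hπ (d 0) (fun x hx => by
    obtain ⟨y, rfl⟩ := (hex x).1 hx
    exact hex0.apply_apply_eq_zero y)
  have hinj : Function.Injective i := by
    rw [injective_iff_map_eq_zero]
    intro x hx
    obtain ⟨y, rfl⟩ := hπ x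
    rw [hi] at hx
    exact (hex y).2 ((hex0 y).1 hx)
  refine ⟨⟨_, h.gwi_ker (0 + 1 + 1), h.gwiStep (0 + 1) hinj fun x => ?_⟩,
    ⟨_, h.gwi_ker 0, I 0, (LinearMap.ker (d 0)).subtype, π, h.1 0,
      .mk' Subtype.val_injective hπ ?_ ?_, fun W hW w => ?_⟩⟩
  · refine (h.2.1 0 x).trans ⟨?_, ?_⟩
    · rintro ⟨y, rfl⟩
      exact ⟨π y, hi y⟩
    · rintro ⟨y, rfl⟩
      obtain ⟨z, rfl⟩ := hπ y
      exact ⟨z, (hi z).symm⟩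
  · exact fun x => (hex x.1).2 ((hex0 x.1).1 x.2)
  · exact fun x hx => ⟨⟨x, (hex0 x).2 ((hex x).1 hx)⟩, rfl⟩
  · obtain ⟨v, hv⟩ := (h.2.2 W hW 0 (i.comp w)).1 (LinearMap.ext fun x => by
      obtain ⟨y, hy⟩ := hπ (w x)
      simp only [LinearMap.comp_apply, ← hy, hi]
      exact (h.2.1 0).apply_apply_eq_zero y)
    exact ⟨v, fun x => hinj ((hi _).trans (LinearMap.congr_fun hv x))⟩

theorem GorensteinWeakInjective.of_equiv {M N : ModuleCat.{u} R}
    (hM : GorensteinWeakInjective R M) (e : M ≃ₗ[R] N) : GorensteinWeakInjective R N := by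
  obtain ⟨I, d, π, h, hπ, hex⟩ := hM
  exact ⟨I, d, e.toLinearMap.comp π, h, e.surjective.comp hπ, fun x => by simp [← hex x]⟩

theorem gorensteinWeakInjective_of_injective {E : ModuleCat.{u} R} (hE : Module.Injective R E) :
    GorensteinWeakInjective R E := by
  have h0 : Module.Injective R (ModuleCat.of R PUnit.{u + 1}) :=
    Module.injective_of_subsingleton PUnit.{u + 1}
  refine .of_steps (𝒢 := fun X => Module.Injective R X) ?_ ?_ hE
  · exact fun A hA => ⟨ModuleCat.of R PUnit.{u + 1}, h0, A, LinearMap.id, 0, hA,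
      .mk' Function.injective_id (fun _ => ⟨0, rfl⟩) (fun _ => rfl) (fun x _ => ⟨x, rfl⟩),
      fun W _ w => ⟨0, fun x => rfl⟩⟩
  · exact fun A hA => ⟨ModuleCat.of R PUnit.{u + 1}, h0, A, 0, LinearMap.id, hA,
      .mk' (fun _ _ _ => rfl) Function.surjective_id (fun _ => rfl)
        (fun x hx => ⟨0, hx.symm⟩), fun W _ w => ⟨w, fun x => rfl⟩⟩

/-- `Ext¹(V, A) = 0` for every Gorenstein weak injective module `A`, phrased through lifting. -/
def GWIOrthogonal (V : ModuleCat.{u} R) : Prop :=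
  ∀ (A B C : ModuleCat.{u} R) (i : A →ₗ[R] B) (p : B →ₗ[R] C), GorensteinWeakInjective R A →
    ShortExactSeq R A B C i p → ∀ w : V →ₗ[R] C, ∃ v : V →ₗ[R] B, ∀ x, p (v x) = w x

theorem WeakInjective.gwiOrthogonal {V : ModuleCat.{u} R} (hV : WeakInjective R V) :
    GWIOrthogonal V := by
  intro A B C i p hA h
  obtain ⟨D, _, I, j, q, hI, h', hW⟩ := hA.exists_steps.1
  exact h.exists_lift hI h' (hW V hV)

theorem GWIOrthogonal.exists_extension {V E V' A : ModuleCat.{u} R} {k : V →ₗ[R] E}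
    {r : E →ₗ[R] V'} (h : ShortExactSeq R V E V' k r) (hV' : GWIOrthogonal V')
    (hA : GorensteinWeakInjective R A) (f : V →ₗ[R] A) : ∃ g : E →ₗ[R] A, ∀ x, g (k x) = f x := by
  obtain ⟨D, _, I, j, q, hI, h', _⟩ := hA.exists_steps.1
  exact h.exists_extension hI h' (hV' A I D j q hA h') f

theorem GWIOrthogonal.of_shortExactSeq {V E V' : ModuleCat.{u} R} {k : V →ₗ[R] E}
    {r : E →ₗ[R] V'} (h : ShortExactSeq R V E V' k r) (hE : Module.Injective R E)
    (hV' : GWIOrthogonal V') : GWIOrthogonal V := by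
  intro A B C i p hA hABC
  obtain ⟨D, hD, I, j, q, hI, h', hW⟩ := hA.exists_steps.1
  refine hABC.exists_lift hI h' fun w => ?_
  obtain ⟨g, hg⟩ := hV'.exists_extension h hD w
  obtain ⟨v, hv⟩ := hW E (weakInjective_of_injective hE) g
  exact ⟨v.comp k, fun x => by simp [hv, hg]⟩

theorem GorensteinWeakInjective.of_shortExactSeq {A B C : ModuleCat.{u} R} {i : A →ₗ[R] B}
    {p : B →ₗ[R] C} (h : ShortExactSeq R A B C i p) (hA : GorensteinWeakInjective R A)
    (hC : GorensteinWeakInjective R C) : GorensteinWeakInjective R B := by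
  refine .of_steps (𝒢 := fun X => ∃ (A C : ModuleCat.{u} R) (i : A →ₗ[R] X) (p : X →ₗ[R] C),
    GorensteinWeakInjective R A ∧ GorensteinWeakInjective R C ∧ ShortExactSeq R A X C i p)
    ?_ ?_ ⟨A, C, i, p, hA, hC, h⟩
  · clear * -
    rintro B ⟨A, C, i, p, hA, hC, h⟩
    obtain ⟨A', hA', I, α, q, hI, hAI, hAW⟩ := hA.exists_steps.1
    obtain ⟨C', hC', J, γ, r, hJ, hCJ, hCW⟩ := hC.exists_steps.1
    obtain ⟨β, hβ⟩ := hI.exists_extension h.1 α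
    let j : B →ₗ[R] ModuleCat.of R (I × J) := β.prod (γ.comp p)
    have hj (b : B) : j b = (β b, γ (p b)) := rfl
    have hjinj : Function.Injective j := by
      rw [injective_iff_map_eq_zero]
      intro x hx
      have h1 : β x = 0 := congrArg Prod.fst hx
      have h2 : γ (p x) = 0 := congrArg Prod.snd hx
      obtain ⟨a, rfl⟩ := h.exists_of_apply_eq_zero ((injective_iff_map_eq_zero γ).1 hCJ.1 _ h2)
      rw [hβ] at h1
      rw [(injective_iff_map_eq_zero α).1 hAI.1 a h1, map_zero]
    let B' := ModuleCat.of R ((I × J) ⧸ LinearMap.range j)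
    let s : ModuleCat.of R (I × J) →ₗ[R] B' := (LinearMap.range j).mkQ
    have hs : Function.Surjective s := Submodule.mkQ_surjective _
    have hsj (x : I × J) : s x = 0 ↔ ∃ b, j b = x := Submodule.Quotient.mk_eq_zero _
    have hses : ShortExactSeq R B (ModuleCat.of R (I × J)) B' j s :=
      .mk' hjinj hs (fun b => (hsj _).2 ⟨b, rfl⟩) (fun x hx => (hsj x).1 hx)
    obtain ⟨i', hi'⟩ := exists_comp_eq_of_surjective hAI.2.1 (s.comp (LinearMap.inl R I J))
      (fun x hx => by
        obtain ⟨a, rfl⟩ := hAI.exists_of_apply_eq_zero hx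
        exact (hsj _).2 ⟨i a, by simp [hj, hβ, h.apply_apply]⟩)
    obtain ⟨p', hp'⟩ := exists_comp_eq_of_surjective hs (r.comp (LinearMap.snd R I J))
      (fun x hx => by
        obtain ⟨b, rfl⟩ := (hsj _).1 hx
        exact hCJ.apply_apply _)
    have h' : ShortExactSeq R A' B' C' i' p' := by
      refine .mk' ?_ ?_ ?_ ?_
      · rw [injective_iff_map_eq_zero]
        intro a ha
        obtain ⟨x, rfl⟩ := hAI.2.1 a
        rw [hi'] at ha
        obtain ⟨b, hb⟩ := (hsj _).1 ha
        have h1 : β b = x := congrArg Prod.fst hb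
        have h2 : γ (p b) = 0 := congrArg Prod.snd hb
        obtain ⟨a, rfl⟩ := h.exists_of_apply_eq_zero
          ((injective_iff_map_eq_zero γ).1 hCJ.1 _ h2)
        rw [← h1, hβ, hAI.apply_apply]
      · intro c
        obtain ⟨y, rfl⟩ := hCJ.2.1 c
        exact ⟨s (0, y), hp' (0, y)⟩
      · intro a
        obtain ⟨x, rfl⟩ := hAI.2.1 a
        rw [hi']
        exact (hp' (x, 0)).trans (map_zero r)
      · intro b hb
        obtain ⟨⟨x, y⟩, rfl⟩ := hs b
        rw [hp'] at hb
        obtain ⟨c, rfl⟩ := hCJ.exists_of_apply_eq_zero (x := y) hb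
        obtain ⟨b, rfl⟩ := h.2.1 c
        refine ⟨q (x - β b), ?_⟩
        rw [hi', ← sub_eq_zero]
        exact (map_sub s _ _).symm.trans ((hsj _).2 ⟨-b, by simp [hj]⟩)
    refine ⟨B', ⟨A', C', i', p', hA', hC', h'⟩, ModuleCat.of R (I × J), j, s, hI.prod hJ, hses,
      fun W hW w => ?_⟩
    obtain ⟨v, hv⟩ := hCW W hW (p'.comp w)
    obtain ⟨w', hw'⟩ := exists_comp_eq_of_injective h'.1
      (w - s.comp ((LinearMap.inr R I J).comp v)) (fun x => h'.exists_of_apply_eq_zero (by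
        have := hp' (0, v x)
        simp only [LinearMap.sub_apply, LinearMap.comp_apply, map_sub]
        rw [sub_eq_zero]
        exact (hv x).symm.trans this.symm))
    obtain ⟨v', hv'⟩ := hAW W hW w'
    refine ⟨v'.prod v, fun x => ?_⟩
    have h1 := hw' x
    rw [← hv', hi', LinearMap.sub_apply, eq_sub_iff_add_eq] at h1
    rw [← h1]
    refine Eq.trans ?_ (map_add s _ _)
    exact congrArg s (Prod.ext (add_zero _).symm (zero_add _).symm)
  · clear * -
    rintro B ⟨A, C, i, p, hA, hC, h⟩
    obtain ⟨A', hA', I, α, q, hI, hAI, hAW⟩ := hA.exists_steps.2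
    obtain ⟨C', hC', J, γ, r, hJ, hCJ, hCW⟩ := hC.exists_steps.2
    obtain ⟨β, hβ⟩ := (weakInjective_of_injective hJ).gwiOrthogonal A B C i p hA h r
    let s : ModuleCat.of R (I × J) →ₗ[R] B := (i.comp q).coprod β
    have hsa (x : I) (y : J) : s (x, y) = i (q x) + β y := rfl
    have hs : Function.Surjective s := by
      intro b
      obtain ⟨y, hy⟩ := hCJ.2.1 (p b)
      obtain ⟨a, ha⟩ := h.exists_of_apply_eq_zero (x := b - β y) (by simp [hβ, hy])
      obtain ⟨x, rfl⟩ := hAI.2.1 a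
      exact ⟨(x, y), by rw [hsa, ha, sub_add_cancel]⟩
    let B' := ModuleCat.of R (LinearMap.ker s)
    let j : B' →ₗ[R] ModuleCat.of R (I × J) := (LinearMap.ker s).subtype
    have hses : ShortExactSeq R B' (ModuleCat.of R (I × J)) B j s :=
      .mk' Subtype.val_injective hs (fun b => b.2) (fun x hx => ⟨⟨x, hx⟩, rfl⟩)
    have hr (x : I) (y : J) (hxy : s (x, y) = 0) : r y = 0 := by
      have := congrArg p hxy
      rwa [hsa, map_add, h.apply_apply, hβ, zero_add, map_zero] at this
    obtain ⟨i', hi'⟩ := exists_comp_eq_of_injective hses.1 ((LinearMap.inl R I J).comp α)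
      (fun x => hses.exists_of_apply_eq_zero ((hsa (α x) 0).trans (by simp [hAI.apply_apply])))
    obtain ⟨p', hp'⟩ := exists_comp_eq_of_injective hCJ.1 ((LinearMap.snd R I J).comp j)
      (fun x => hCJ.exists_of_apply_eq_zero (hr _ _ x.2))
    have h' : ShortExactSeq R A' B' C' i' p' := by
      refine .mk' ?_ ?_ ?_ ?_
      · rw [injective_iff_map_eq_zero]
        intro a ha
        have := hi' a
        rw [ha, map_zero] at this
        exact (injective_iff_map_eq_zero α).1 hAI.1 a (congrArg Prod.fst this).symm
      · intro c
        obtain ⟨a, ha⟩ := h.exists_of_apply_eq_zero (x := β (γ c)) (by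
          rw [hβ, hCJ.apply_apply])
        obtain ⟨x, rfl⟩ := hAI.2.1 a
        refine ⟨⟨(-x, γ c), ?_⟩, hCJ.1 (hp' _)⟩
        exact (hsa _ _).trans (by simp [ha])
      · intro a
        apply hCJ.1
        rw [hp', LinearMap.comp_apply, hi', map_zero]
        rfl
      · rintro ⟨⟨x, y⟩, hxy⟩ hb
        have hy : γ _ = y := hp' ⟨(x, y), hxy⟩
        rw [hb, map_zero] at hy
        subst hy
        have hx : i (q x) = 0 := by
          have := (hsa x 0).symm.trans hxy
          rwa [map_zero, add_zero] at this
        obtain ⟨a, rfl⟩ := hAI.exists_of_apply_eq_zero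
          ((injective_iff_map_eq_zero i).1 h.1 _ hx)
        exact ⟨a, Subtype.ext (hi' a)⟩
    refine ⟨B', ⟨A', C', i', p', hA', hC', h'⟩, ModuleCat.of R (I × J), j, s, hI.prod hJ, hses,
      fun W hW w => ?_⟩
    obtain ⟨v, hv⟩ := hCW W hW (p.comp w)
    obtain ⟨w', hw'⟩ := exists_comp_eq_of_injective h.1 (w - β.comp v)
      (fun x => h.exists_of_apply_eq_zero (by simp [hβ, hv]))
    obtain ⟨v', hv'⟩ := hAW W hW w'
    exact ⟨v'.prod v, fun x => (hsa _ _).trans (by simp [hv', hw'])⟩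

theorem GorensteinWeakInjective.injective_of_widLE {G : ModuleCat.{u} R} {k : ℕ}
    (hG : GorensteinWeakInjective R G) (hk : WidLE R G k) : Module.Injective R G := by
  induction k generalizing G with
  | zero =>
    obtain ⟨A, _, I, i, p, hI, _, hW⟩ := hG.exists_steps.2
    obtain ⟨v, hv⟩ := hW G hk LinearMap.id
    exact hI.of_retract v p hv
  | succ k ih =>
    obtain ⟨B, hB, I, i, p, hI, h, hW⟩ := hG.exists_steps.1
    have hB' := ih hB (hk.right h hI)
    obtain ⟨v, hv⟩ := hW B (weakInjective_of_injective hB') LinearMap.id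
    obtain ⟨t, ht⟩ := exists_comp_eq_of_injective h.1 (LinearMap.id - v.comp p)
      (fun x => h.exists_of_apply_eq_zero (by simp [hv]))
    refine hI.of_retract i t fun x => h.1 ?_
    rw [ht]
    simp [h.apply_apply]

/-! ### Finite coresolutions -/

/-- `M` has a coresolution of length `n` by modules satisfying `P`. -/
def CoresolutionLE (P : ModuleCat.{u} R → Prop) (M : ModuleCat.{u} R) (n : ℕ) : Prop :=
  ∃ (G : ℕ → ModuleCat.{u} R) (d : ∀ i, G i →ₗ[R] G (i + 1)) (ε : M →ₗ[R] G 0),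
    IsFiniteCoresolution R M n G d ε ∧ ∀ i, P (G i)

namespace CoresolutionLE

variable {P : ModuleCat.{u} R → Prop} {M X C : ModuleCat.{u} R} {n : ℕ}

theorem mono {Q : ModuleCat.{u} R → Prop} (h : CoresolutionLE P M n) (hPQ : ∀ X, P X → Q X) :
    CoresolutionLE Q M n :=
  let ⟨G, d, ε, h, hP⟩ := h
  ⟨G, d, ε, h, fun i => hPQ _ (hP i)⟩

theorem exists_equiv (h : CoresolutionLE P M 0) : ∃ X, P X ∧ Nonempty (M ≃ₗ[R] X) := by
  obtain ⟨G, d, ε, ⟨hε, h0, -, hz⟩, hP⟩ := h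
  exact ⟨G 0, hP 0, ⟨.ofBijective ε ⟨hε, fun x => (h0 x).1 (hz 1 one_pos _)⟩⟩⟩

theorem exists_shortExactSeq (h : CoresolutionLE P M (n + 1)) :
    ∃ (X C : ModuleCat.{u} R) (i : M →ₗ[R] X) (p : X →ₗ[R] C),
      P X ∧ ShortExactSeq R M X C i p ∧ CoresolutionLE P C n := by
  obtain ⟨G, d, ε, ⟨hε, h0, hd, hz⟩, hP⟩ := h
  refine ⟨G 0, ModuleCat.of R (LinearMap.ker (d 1)), ε,
    (d 0).codRestrict _ fun x => (hd 0).apply_apply_eq_zero x, hP 0, .mk' hε ?_ ?_ ?_,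
    fun i => G (i + 1), fun i => d (i + 1), (LinearMap.ker (d 1)).subtype,
    ⟨Subtype.val_injective, fun x => by simp, fun i => hd (i + 1),
      fun i hi => hz (i + 1) (Nat.succ_lt_succ hi)⟩, fun i => hP (i + 1)⟩
  · rintro ⟨x, hx⟩
    obtain ⟨y, rfl⟩ := (hd 0 x).1 hx
    exact ⟨y, rfl⟩
  · exact fun x => Subtype.ext (h0.apply_apply_eq_zero x)
  · exact fun x hx => (h0 x).1 (congrArg Subtype.val hx)

theorem of_equiv (hX : P X) (h0 : P (ModuleCat.of R PUnit.{u + 1})) (e : M ≃ₗ[R] X) :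
    CoresolutionLE P M 0 := by
  let G : ℕ → ModuleCat.{u} R := fun i => match i with
    | 0 => X
    | _ + 1 => ModuleCat.of R PUnit.{u + 1}
  have hG : ∀ i, ∀ x y : G (i + 1), x = y := fun _ _ _ => rfl
  refine ⟨G, fun _ => 0, e.toLinearMap, ⟨e.injective, fun x => ?_, fun i x => ?_, fun i hi x => ?_⟩,
    fun i => ?_⟩
  · exact ⟨fun _ => e.surjective x, fun _ => rfl⟩
  · exact ⟨fun _ => ⟨0, hG i _ _⟩, fun _ => rfl⟩
  · obtain _ | i := i
    · exact absurd hi (lt_irrefl 0)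
    · exact hG i _ _
  · obtain _ | i := i
    · exact hX
    · exact h0

theorem of_shortExactSeq {i : M →ₗ[R] X} {p : X →ₗ[R] C} (hX : P X)
    (h : ShortExactSeq R M X C i p) (hC : CoresolutionLE P C n) : CoresolutionLE P M (n + 1) := by
  obtain ⟨G, d, ε, ⟨hε, h0, hd, hz⟩, hP⟩ := hC
  let G' : ℕ → ModuleCat.{u} R := fun i => match i with
    | 0 => X
    | i + 1 => G i
  let d' : ∀ i, G' i →ₗ[R] G' (i + 1) := fun i => match i with
    | 0 => ε.comp p
    | i + 1 => d i
  refine ⟨G', d', i, ⟨h.1, fun x => ?_, fun k => ?_, fun k hk => ?_⟩, fun k => ?_⟩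
  · refine Iff.trans ⟨fun hx => ?_, fun hx => ?_⟩ (h.2.2 x)
    · exact (injective_iff_map_eq_zero ε).1 hε _ hx
    · exact (congrArg ε hx).trans (map_zero ε)
  · obtain _ | k := k
    · intro x
      refine (h0 x).trans ⟨?_, ?_⟩
      · rintro ⟨y, rfl⟩
        obtain ⟨z, rfl⟩ := h.2.1 y
        exact ⟨z, rfl⟩
      · rintro ⟨z, rfl⟩
        exact ⟨p z, rfl⟩
    · exact hd k
  · obtain _ | k := k
    · exact absurd hk (Nat.not_lt_zero _)
    · exact hz k (Nat.lt_of_succ_lt_succ hk)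
  · obtain _ | k := k
    · exact hX
    · exact hP k

theorem congr {N : ModuleCat.{u} R} (h : CoresolutionLE P M n) (e : N ≃ₗ[R] M) :
    CoresolutionLE P N n := by
  obtain ⟨G, d, ε, ⟨hε, h0, hd, hz⟩, hP⟩ := h
  refine ⟨G, d, ε.comp e.toLinearMap, ⟨hε.comp e.injective, fun x => (h0 x).trans ⟨?_, ?_⟩, hd, hz⟩,
    hP⟩
  · rintro ⟨y, rfl⟩
    exact ⟨e.symm y, by simp⟩
  · rintro ⟨y, rfl⟩
    exact ⟨e y, rfl⟩

end CoresolutionLE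

theorem Module.Injective.of_equiv {E I : ModuleCat.{u} R} (hI : Module.Injective R I)
    (e : E ≃ₗ[R] I) : Module.Injective R E :=
  hI.of_retract e.toLinearMap e.symm.toLinearMap e.symm_apply_apply

theorem idLE_iff {V : ModuleCat.{u} R} {n : ℕ} :
    IdLE R V n ↔ CoresolutionLE (fun E => Module.Injective R E) V n := Iff.rfl

theorem IdLE.gwiOrthogonal {V : ModuleCat.{u} R} {n : ℕ} (h : IdLE R V n) : GWIOrthogonal V := by
  induction n generalizing V with
  | zero =>
    obtain ⟨X, hX, ⟨e⟩⟩ := CoresolutionLE.exists_equiv (idLE_iff.1 h)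
    exact (weakInjective_of_injective (hX.of_equiv e)).gwiOrthogonal
  | succ n ih =>
    obtain ⟨X, C, i, p, hX, hses, hC⟩ := CoresolutionLE.exists_shortExactSeq (idLE_iff.1 h)
    exact (ih (idLE_iff.2 hC)).of_shortExactSeq hses hX

theorem IdLE.widLE {V : ModuleCat.{u} R} {n : ℕ} (h : IdLE R V n) : WidLE R V n := by
  induction n generalizing V with
  | zero =>
    obtain ⟨X, hX, ⟨e⟩⟩ := CoresolutionLE.exists_equiv (idLE_iff.1 h)
    exact widLE_of_injective (hX.of_equiv e) 0
  | succ n ih =>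
    obtain ⟨X, C, i, p, hX, hses, hC⟩ := CoresolutionLE.exists_shortExactSeq (idLE_iff.1 h)
    exact .left hses (widLE_of_injective hX _) (ih (idLE_iff.2 hC))

/-- A module with `Gwid M ≤ n` embeds in a Gorenstein weak injective module with cokernel of
injective dimension at most `n - 1`. -/
theorem GwidLE.exists_shortExactSeq {M : ModuleCat.{u} R} {n : ℕ} (h : GwidLE R M n) :
    ∃ (G V : ModuleCat.{u} R) (φ : M →ₗ[R] G) (ψ : G →ₗ[R] V),
      GorensteinWeakInjective R G ∧ ShortExactSeq R M G V φ ψ ∧ (n = 0 → Subsingleton V) ∧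
        ∀ m, n = m + 1 → IdLE R V m := by
  have h0 : Module.Injective R (ModuleCat.of R PUnit.{u + 1}) :=
    Module.injective_of_subsingleton PUnit.{u + 1}
  induction n generalizing M with
  | zero =>
    obtain ⟨X, hX, ⟨e⟩⟩ := CoresolutionLE.exists_equiv h
    exact ⟨M, ModuleCat.of R PUnit.{u + 1}, LinearMap.id, 0, hX.of_equiv e.symm,
      .mk' Function.injective_id (fun _ => ⟨0, rfl⟩) (fun _ => rfl) (fun x _ => ⟨x, rfl⟩),
      fun _ => inferInstanceAs (Subsingleton PUnit), fun m hm => absurd hm.symm m.succ_ne_zero⟩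
  | succ n ih =>
    obtain ⟨X, C, i, p, hX, hses, hC⟩ := CoresolutionLE.exists_shortExactSeq h
    obtain ⟨G, V, φ, ψ, hG, hV, hV0, hVm⟩ := ih hC
    obtain ⟨Z, hZ, I, j, q, hI, hZI, -⟩ := hG.exists_steps.2
    let U := LinearMap.ker (ψ.comp q)
    have hU : ShortExactSeq R (ModuleCat.of R U) I V U.subtype (ψ.comp q) :=
      .mk' Subtype.val_injective (hV.2.1.comp hZI.2.1) (fun x => x.2) (fun x hx => ⟨⟨x, hx⟩, rfl⟩)
    let Y := LinearMap.ker
      ((φ.comp p).comp (LinearMap.fst R X I) - q.comp (LinearMap.snd R X I))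
    have hY (x : X × I) : x ∈ Y ↔ φ (p x.1) = q x.2 := sub_eq_zero
    let a : Y →ₗ[R] U := ((LinearMap.snd R X I).comp Y.subtype).codRestrict U fun x => by
      change ψ (q x.1.2) = 0
      rw [← (hY x.1).1 x.2, hV.apply_apply]
    let b : M →ₗ[R] Y := ((LinearMap.inl R X I).comp i).codRestrict Y fun x => (hY _).2 (by
      simp [hses.apply_apply])
    let c : Y →ₗ[R] X := (LinearMap.fst R X I).comp Y.subtype
    let e : Z →ₗ[R] Y := ((LinearMap.inr R X I).comp j).codRestrict Y fun x => (hY _).2 (by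
      simp [hZI.apply_apply])
    have hM : ShortExactSeq R M (ModuleCat.of R Y) (ModuleCat.of R U) b a := by
      refine .mk' (fun x y hxy => hses.1 (congrArg (fun t : Y => t.1.1) hxy)) ?_ (fun x => rfl) ?_
      · rintro ⟨x, hx⟩
        obtain ⟨y, hy⟩ := hV.exists_of_apply_eq_zero (x := q x) hx
        obtain ⟨z, rfl⟩ := hses.2.1 y
        exact ⟨⟨(z, x), (hY _).2 hy⟩, rfl⟩
      · rintro ⟨⟨x, y⟩, hxy⟩ hy
        have hy : y = 0 := congrArg Subtype.val hy
        subst hy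
        have hx : φ (p x) = 0 := ((hY _).1 hxy).trans (map_zero q)
        obtain ⟨z, rfl⟩ := hses.exists_of_apply_eq_zero
          ((injective_iff_map_eq_zero φ).1 hV.1 _ hx)
        exact ⟨z, rfl⟩
    have hZY : ShortExactSeq R Z (ModuleCat.of R Y) X e c := by
      refine .mk' (fun x y hxy => hZI.1 (congrArg (fun t : Y => t.1.2) hxy)) ?_ (fun x => rfl) ?_
      · intro x
        obtain ⟨y, hy⟩ := hZI.2.1 (φ (p x))
        exact ⟨⟨(x, y), (hY _).2 hy.symm⟩, rfl⟩
      · rintro ⟨⟨x, y⟩, hxy⟩ hx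
        have hx : x = 0 := hx
        subst hx
        have hy : q y = 0 := ((hY _).1 hxy).symm.trans (by simp)
        obtain ⟨z, rfl⟩ := hZI.exists_of_apply_eq_zero hy
        exact ⟨z, rfl⟩
    refine ⟨ModuleCat.of R Y, ModuleCat.of R U, b, a, .of_shortExactSeq hZY hZ hX, hM,
      fun h => absurd h n.succ_ne_zero, ?_⟩
    rintro m hm
    obtain rfl : n = m := Nat.succ_injective hm
    obtain _ | n := n
    · have := hV0 rfl
      exact idLE_iff.2 (.of_equiv hI h0 (.ofBijective U.subtype
        ⟨Subtype.val_injective, fun x => ⟨⟨x, Subsingleton.elim _ _⟩, rfl⟩⟩))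
    · exact idLE_iff.2 (.of_shortExactSeq hI hU (idLE_iff.1 (hVm n rfl)))

theorem gwid_eq_coe {M : ModuleCat.{u} R} {n : ℕ} (h : Gwid R M = n) :
    GwidLE R M n ∧ ∀ m, GwidLE R M m → n ≤ m := by
  have hne : {c : ℕ∞ | ∃ n : ℕ, c = n ∧ GwidLE R M n}.Nonempty := by
    rw [Set.nonempty_iff_ne_empty]
    intro he
    rw [Gwid, he, sInf_empty] at h
    exact ENat.natCast_ne_top n h.symm
  constructor
  · obtain ⟨m, hm, hM⟩ := csInf_mem hne
    obtain rfl : n = m := by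
      have := h.symm.trans hm
      exact_mod_cast this
    exact hM
  · intro m hm
    have : Gwid R M ≤ m := sInf_le ⟨m, rfl, hm⟩
    rw [h] at this
    exact_mod_cast this

end

/-- A module of finite Gorenstein weak injective dimension `n` admits a monomorphic
Gorenstein weak injective preenvelope whose cokernel has injective dimension `n - 1`
(it is zero when `n = 0`); moreover the preenvelope is injective when `wid_R M < ∞`. -/
theorem exists_gorensteinWeakInjective_preenvelope (M : ModuleCat.{u} R) (n : ℕ)
    (h : Gwid R M = (n : ℕ∞)) :
    ∃ (G : ModuleCat.{u} R) (φ : M →ₗ[R] G), Function.Injective φ ∧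
      GWIPreenvelope R M G φ ∧
      (n = 0 → Function.Surjective φ) ∧
      (n ≠ 0 → Idim R (ModuleCat.of R (↥G ⧸ LinearMap.range φ)) = ((n - 1 : ℕ) : ℕ∞)) ∧
      ((∃ k : ℕ, WidLE R M k) → Module.Injective R G) := by
  obtain ⟨hn, hmin⟩ := gwid_eq_coe h
  obtain ⟨G, V, φ, ψ, hG, hV, hV0, hVm⟩ := hn.exists_shortExactSeq
  have hid : ∃ m, IdLE R V m := by
    obtain _ | n := n
    · have := hV0 rfl
      exact ⟨0, idLE_iff.2 (.of_equiv (Module.injective_of_subsingleton V)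
        (Module.injective_of_subsingleton PUnit.{u + 1}) (LinearEquiv.refl R V))⟩
    · exact ⟨n, hVm n rfl⟩
  obtain ⟨l, hl⟩ := hid
  refine ⟨G, φ, hV.1, ⟨hG, fun G' hG' f => ?_⟩, fun hn0 x => ?_, fun hn0 => ?_, ?_⟩
  · obtain ⟨g, hg⟩ := hl.gwiOrthogonal.exists_extension hV hG' f
    exact ⟨g, LinearMap.ext hg⟩
  · have := hV0 hn0
    exact hV.exists_of_apply_eq_zero (Subsingleton.elim _ _)
  · let e : (G ⧸ LinearMap.range φ) ≃ₗ[R] V :=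
      (Submodule.quotEquivOfEq _ _ (LinearMap.exact_iff.1 hV.2.2).symm).trans
        (ψ.quotKerEquivOfSurjective hV.2.1)
    obtain ⟨m, rfl⟩ := Nat.exists_eq_succ_of_ne_zero hn0
    refine le_antisymm (sInf_le ⟨m, rfl, idLE_iff.2 ((idLE_iff.1 (hVm m rfl)).congr e)⟩)
      (le_sInf ?_)
    rintro _ ⟨k, rfl, hk⟩
    have hk := (idLE_iff.1 hk).congr (N := V) e.symm
    have := hmin (k + 1) (CoresolutionLE.of_shortExactSeq hG hV
      (hk.mono fun _ => gorensteinWeakInjective_of_injective))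
    exact_mod_cast Nat.le_of_succ_le_succ this
  · rintro ⟨k, hk⟩
    exact hG.injective_of_widLE (.middle hV (hk.mono (le_max_left k l))
      (hl.widLE.mono (le_max_right k l)))
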